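/- Fix a link bid matrix B = (β_{mℓ}) with β_{mℓ} ≥ 0. For each user m: if Σ_k β_{mk} > 0, let r_m(B) be the unique nonnegative solution of U_m'(r) = 2r/(Σ_k β_{mk}); then the bid vector p_m^B with p_{mℓ}^B = β_{mℓ} r_m(B)²/(Σ_k β_{mk})² maximizes the function p_m ↦ U_m(Σ_ℓ √(p_{mℓ} β_{mℓ})) − Σ_ℓ p_{mℓ} over all nonnegative p_m. If Σ_k β_{mk} = 0, then p_{mℓ}^B = 0 for all ℓ is the maximizer. -/

import Mathlib

open Finset

/-!
With `S = ∑ ℓ, β ℓ`, the Cauchy–Schwarz inequality shows that a user who obtains total rate `x` pays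
at least `x ^ 2 / S`, and bids proportional to `β` attain this bound. The payoff is therefore at
most `U x - x ^ 2 / S`, a concave function of `x` whose first-order condition is
`U' r = 2 * r / S`.
-/

section Concave

variable {s : Set ℝ} {f : ℝ → ℝ} {x : ℝ}

theorem isMaxOn_of_concaveOn_of_hasDerivWithinAt_zero (hf : ConcaveOn ℝ s f) (hx : x ∈ s)
    (hf' : HasDerivWithinAt f 0 s x) : IsMaxOn f s x := by
  refine isMaxOn_iff.2 fun y hy => ?_
  rcases lt_trichotomy y x with hyx | rfl | hxy
  · have hslope : 0 ≤ slope f y x := hf.le_slope_of_hasDerivWithinAt hy hx hyx hf'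
    rw [slope_def_field, le_div_iff₀ (sub_pos.2 hyx), zero_mul] at hslope
    exact sub_nonneg.1 hslope
  · exact le_rfl
  · have hslope : slope f x y ≤ 0 := hf.slope_le_of_hasDerivWithinAt hx hy hxy hf'
    rw [slope_def_field, div_le_iff₀ (sub_pos.2 hxy), zero_mul] at hslope
    exact sub_nonpos.1 hslope

theorem isMaxOn_sub_mul_sq_of_concaveOn {c : ℝ} (hf : ConcaveOn ℝ s f) (hc : 0 ≤ c) (hx : x ∈ s)
    (hf' : HasDerivWithinAt f (c * (2 * x)) s x) : IsMaxOn (fun y => f y - c * y ^ 2) s x := by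
  have hconvex : ConvexOn ℝ s fun y : ℝ => c * y ^ 2 :=
    (even_two.convexOn_pow.subset (Set.subset_univ s) hf.1).smul hc
  have hderiv : HasDerivWithinAt (fun y : ℝ => c * y ^ 2) (c * (2 * x)) s x := by
    simpa using ((hasDerivAt_pow 2 x).const_mul c).hasDerivWithinAt
  have hcritical : HasDerivWithinAt (fun y => f y - c * y ^ 2) 0 s x :=
    sub_self (c * (2 * x)) ▸ hf'.sub hderiv
  exact isMaxOn_of_concaveOn_of_hasDerivWithinAt_zero (hf.sub hconvex) hx hcritical

end Concave

section UserBids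

variable {ι : Type*} [Fintype ι]

/-- The total rate `∑ ℓ, √(p ℓ * β ℓ)` that a user bidding `p` obtains over links bidding `β`. -/
noncomputable def totalRate (β p : ι → ℝ) : ℝ :=
  ∑ ℓ, √(p ℓ * β ℓ)

/-- The payoff `Q_m` of a user with utility `U` bidding `p` against the link bids `β`: the utility
of the rate obtained minus the total payment. -/
noncomputable def userPayoff (U : ℝ → ℝ) (β p : ι → ℝ) : ℝ :=
  U (totalRate β p) - ∑ ℓ, p ℓ

/-- The bid vector `p_m^B` that buys the total rate `r`, as a function of `r` and the link bids `β`.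
It is `0` when the link bids sum to `0`, by the convention `x / 0 = 0`. -/
noncomputable def bestResponse (β : ι → ℝ) (r : ℝ) (ℓ : ι) : ℝ :=
  β ℓ * r ^ 2 / (∑ k, β k) ^ 2

variable {U : ℝ → ℝ} {β p : ι → ℝ} {r : ℝ}

theorem totalRate_nonneg (β p : ι → ℝ) : 0 ≤ totalRate β p :=
  sum_nonneg fun _ _ => Real.sqrt_nonneg _

theorem totalRate_sq_le (hβ : 0 ≤ β) (hp : 0 ≤ p) :
    totalRate β p ^ 2 ≤ (∑ ℓ, p ℓ) * ∑ ℓ, β ℓ :=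
  sum_sq_le_sum_mul_sum_of_sq_le_mul _ (fun ℓ _ => hp ℓ) (fun ℓ _ => hβ ℓ)
    fun ℓ _ => (Real.sq_sqrt (mul_nonneg (hp ℓ) (hβ ℓ))).le

theorem totalRate_eq_zero_of_sum_eq_zero (hβ : 0 ≤ β) (hp : 0 ≤ p) (hsum : ∑ ℓ, β ℓ = 0) :
    totalRate β p = 0 := by
  have hsq := totalRate_sq_le hβ hp
  rw [hsum, mul_zero] at hsq
  exact (sq_nonpos_iff _).1 hsq

theorem userPayoff_le (hβ : 0 ≤ β) (hsum : 0 < ∑ ℓ, β ℓ) (hp : 0 ≤ p) :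
    userPayoff U β p ≤ U (totalRate β p) - (∑ ℓ, β ℓ)⁻¹ * totalRate β p ^ 2 :=
  sub_le_sub_left ((inv_mul_le_iff₀' hsum).2 (totalRate_sq_le hβ hp)) _

theorem totalRate_bestResponse (hβ : 0 ≤ β) (hsum : 0 < ∑ ℓ, β ℓ) (hr : 0 ≤ r) :
    totalRate β (bestResponse β r) = r := by
  have hlink (ℓ : ι) : √(bestResponse β r ℓ * β ℓ) = β ℓ * (r / ∑ k, β k) := by
    have hsq : bestResponse β r ℓ * β ℓ = (β ℓ * (r / ∑ k, β k)) ^ 2 := by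
      rw [bestResponse]
      ring
    rw [hsq, Real.sqrt_sq (mul_nonneg (hβ ℓ) (div_nonneg hr hsum.le))]
  simp only [totalRate, hlink]
  rw [← sum_mul, mul_div_cancel₀ _ hsum.ne']

theorem sum_bestResponse (β : ι → ℝ) (r : ℝ) :
    ∑ ℓ, bestResponse β r ℓ = (∑ ℓ, β ℓ)⁻¹ * r ^ 2 := by
  simp only [bestResponse]
  rw [← sum_div, ← sum_mul]
  field_simp

theorem userPayoff_bestResponse (hβ : 0 ≤ β) (hsum : 0 < ∑ ℓ, β ℓ) (hr : 0 ≤ r) :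
    userPayoff U β (bestResponse β r) = U r - (∑ ℓ, β ℓ)⁻¹ * r ^ 2 := by
  rw [userPayoff, totalRate_bestResponse hβ hsum hr, sum_bestResponse]

theorem isMaxOn_userPayoff_bestResponse (hU : ConcaveOn ℝ (Set.Ici 0) U) (hβ : 0 ≤ β)
    (hsum : 0 < ∑ ℓ, β ℓ) (hr : 0 ≤ r)
    (hderiv : HasDerivWithinAt U (2 * r / ∑ ℓ, β ℓ) (Set.Ici 0) r) :
    IsMaxOn (userPayoff U β) (Set.Ici 0) (bestResponse β r) := by
  refine isMaxOn_iff.2 fun q hq => ?_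
  rw [div_eq_inv_mul] at hderiv
  calc
    userPayoff U β q ≤ U (totalRate β q) - (∑ ℓ, β ℓ)⁻¹ * totalRate β q ^ 2 :=
      userPayoff_le hβ hsum hq
    _ ≤ U r - (∑ ℓ, β ℓ)⁻¹ * r ^ 2 :=
      isMaxOn_sub_mul_sq_of_concaveOn hU (inv_nonneg.2 hsum.le) hr hderiv (totalRate_nonneg β q)
    _ = userPayoff U β (bestResponse β r) := (userPayoff_bestResponse hβ hsum hr).symm

theorem isMaxOn_userPayoff_zero (hβ : 0 ≤ β) (hsum : ∑ ℓ, β ℓ = 0) :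
    IsMaxOn (userPayoff U β) (Set.Ici 0) 0 := by
  refine isMaxOn_iff.2 fun q hq => ?_
  have hrate : totalRate β q = totalRate β 0 := by
    rw [totalRate_eq_zero_of_sum_eq_zero hβ hq hsum,
      totalRate_eq_zero_of_sum_eq_zero hβ le_rfl hsum]
  have hpayment : ∑ ℓ, (0 : ι → ℝ) ℓ ≤ ∑ ℓ, q ℓ := sum_le_sum fun ℓ _ => hq ℓ
  rw [userPayoff, userPayoff, hrate]
  exact sub_le_sub_left hpayment _

theorem statement16_general (hU : ConcaveOn ℝ (Set.Ici 0) U) (hβ : 0 ≤ β) :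
    (∀ r : ℝ, 0 < ∑ ℓ, β ℓ → 0 ≤ r →
      HasDerivWithinAt U (2 * r / ∑ ℓ, β ℓ) (Set.Ici 0) r →
        IsMaxOn (userPayoff U β) (Set.Ici 0) (bestResponse β r)) ∧
    (∑ ℓ, β ℓ = 0 → IsMaxOn (userPayoff U β) (Set.Ici 0) 0) :=
  ⟨fun _ => isMaxOn_userPayoff_bestResponse hU hβ, isMaxOn_userPayoff_zero hβ⟩

end UserBids

/-- User best response in the multi-link Stackelberg mechanism,
uncapacitated.  Fix a row `β = (β_ℓ)` of link bids for user `m`.  If `Σ_k β_k > 0`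
and `r ≥ 0` solves `U'(r) = 2r/(Σ_k β_k)`, then the bid vector
`p_ℓ = β_ℓ r²/(Σ_k β_k)²` maximizes `p ↦ U(Σ_ℓ √(p_ℓ β_ℓ)) − Σ_ℓ p_ℓ` over
nonnegative `p`.  If `Σ_k β_k = 0`, the zero bid vector is the maximizer. -/
theorem statement16
    (L : ℕ) (hL : 0 < L)
    (U : ℝ → ℝ)
    (hUconc : ConcaveOn ℝ (Set.Ici 0) U)
    (hUmono : StrictMonoOn U (Set.Ici 0))
    (hUdiff : ∀ x ∈ Set.Ici (0:ℝ), DifferentiableAt ℝ U x)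
    (hUderivcont : ContinuousOn (deriv U) (Set.Ici 0))
    (β : Fin L → ℝ) (hβ : ∀ ℓ, 0 ≤ β ℓ) :
    (∀ r : ℝ, 0 < ∑ k, β k → 0 ≤ r → deriv U r = 2 * r / (∑ k, β k) →
      ∀ q : Fin L → ℝ, (∀ ℓ, 0 ≤ q ℓ) →
        U (∑ ℓ, Real.sqrt (q ℓ * β ℓ)) - ∑ ℓ, q ℓ ≤
        U (∑ ℓ, Real.sqrt (β ℓ * r ^ 2 / (∑ k, β k) ^ 2 * β ℓ)) -
          ∑ ℓ, β ℓ * r ^ 2 / (∑ k, β k) ^ 2) ∧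
    ((∑ k, β k) = 0 →
      ∀ q : Fin L → ℝ, (∀ ℓ, 0 ≤ q ℓ) →
        U (∑ ℓ, Real.sqrt (q ℓ * β ℓ)) - ∑ ℓ, q ℓ ≤
        U (∑ ℓ, Real.sqrt ((0:ℝ) * β ℓ)) - ∑ _ℓ : Fin L, (0:ℝ)) :=
  have ⟨hpos, hzero⟩ := statement16_general hUconc hβ
  ⟨fun r hsum hr hd _ hq => hpos r hsum hr (hd ▸ (hUdiff r hr).hasDerivAt.hasDerivWithinAt) hq,
    fun hsum _ hq => hzero hsum hq⟩
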